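/- Fix an integer K ≥ 4, let δ ∈ [1/√K, 1), and let A ∈ ℝ^{m×(K+1)} be any matrix with AᵀA = G, where G ∈ ℝ^{(K+1)×(K+1)} has unit diagonal, G₁ⱼ = Gⱼ₁ = δ/√K for 2 ≤ j ≤ K+1, and G_{jk} = 0 for distinct j, k ≥ 2 (such A exists since G is positive semidefinite). Then: (a) every column of A has unit ℓ₂-norm; (b) A satisfies the RIP of order K+1 with constant δ, and every δ' ∈ [0,1) with which A satisfies the RIP of order K+1 satisfies δ' ≥ δ; and (c) for the K-sparse vector x ∈ ℝ^{K+1} with x₁ = 0 and x_j = 1 for 2 ≤ j ≤ K+1, and y = A x, one has |⟨y, a_1⟩| = √K·δ, |⟨y, a_j⟩| = 1 for 2 ≤ j ≤ K+1, and √K·δ ≥ 1, so the incorrect index 1 attains the maximum of j ↦ |⟨y, a_j⟩|. -/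

import Mathlib

open Finset

noncomputable section

/-- The support of a vector as a `Finset`. -/
def vsupp {n : ℕ} (x : Fin n → ℝ) : Finset (Fin n) :=
  Finset.univ.filter (fun i => x i ≠ 0)

/-- `A` satisfies the restricted isometry property of order `r` with constant `δ`. -/
def RIP {m n : ℕ} (A : Matrix (Fin m) (Fin n) ℝ) (r : ℕ) (δ : ℝ) : Prop :=
  ∀ x : Fin n → ℝ, (vsupp x).card ≤ r →
    (1 - δ) * (∑ i, x i ^ 2) ≤ (∑ i, (A.mulVec x) i ^ 2) ∧
      (∑ i, (A.mulVec x) i ^ 2) ≤ (1 + δ) * (∑ i, x i ^ 2)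

/-- The `j`-th column of `A`. -/
def col {m n : ℕ} (A : Matrix (Fin m) (Fin n) ℝ) (j : Fin n) : Fin m → ℝ :=
  fun i => A i j

/-- Euclidean dot product. -/
def dot {m : ℕ} (u v : Fin m → ℝ) : ℝ := ∑ i, u i * v i

/-- Squared Euclidean norm. -/
def nsq {m : ℕ} (v : Fin m → ℝ) : ℝ := ∑ i, v i ^ 2

/-- Euclidean norm. -/
def enorm {m : ℕ} (v : Fin m → ℝ) : ℝ := Real.sqrt (nsq v)

/-- Squared norm of the restriction of `x` to `T`. -/
def rsq {n : ℕ} (x : Fin n → ℝ) (T : Finset (Fin n)) : ℝ := ∑ i ∈ T, x i ^ 2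

/-- Norm of the restriction of `x` to `T`. -/
def rnorm {n : ℕ} (x : Fin n → ℝ) (T : Finset (Fin n)) : ℝ := Real.sqrt (rsq x T)

/-- Span of the columns of `A` indexed by `J`. -/
def colSpan {m n : ℕ} (A : Matrix (Fin m) (Fin n) ℝ) (J : Finset (Fin n)) :
    Submodule ℝ (EuclideanSpace ℝ (Fin m)) :=
  Submodule.span ℝ ((fun j => (WithLp.equiv 2 (Fin m → ℝ)).symm (col A j)) '' (J : Set (Fin n)))

/-- The projection `P_J^⊥ v` of `v` onto the orthogonal complement of the span of the
columns of `A` indexed by `J`. -/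
def projPerp {m n : ℕ} (A : Matrix (Fin m) (Fin n) ℝ) (J : Finset (Fin n)) (v : Fin m → ℝ) :
    Fin m → ℝ :=
  v - WithLp.equiv 2 (Fin m → ℝ)
    ((Submodule.orthogonalProjectionOnto (colSpan A J) ((WithLp.equiv 2 (Fin m → ℝ)).symm v) :
      EuclideanSpace ℝ (Fin m)))

/-- The OLS selection criterion value for index `j`, given measurements `y` and current
estimated support `Sk`. -/
def olsQuot {m n : ℕ} (A : Matrix (Fin m) (Fin n) ℝ) (y : Fin m → ℝ) (Sk : Finset (Fin n))
    (j : Fin n) : ℝ :=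
  |dot (projPerp A Sk y) (col A j)| / _root_.enorm (projPerp A Sk (col A j))

/-- The estimated support of OLS after `k` iterations (ties broken towards smaller index). -/
def olsSupp {m n : ℕ} (A : Matrix (Fin m) (Fin n) ℝ) (y : Fin m → ℝ) : ℕ → Finset (Fin n)
  | 0 => ∅
  | k + 1 =>
    let Sk := olsSupp A y k
    let cand := (Finset.univ \ Sk).filter
      (fun j => ∀ i ∈ Finset.univ \ Sk, olsQuot A y Sk i ≤ olsQuot A y Sk j)
    if h : cand.Nonempty then insert (cand.min' h) Sk else Sk

/-- The constant `C_K` from the paper. -/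
def CK (K : ℕ) : ℝ :=
  if K = 1 then 1 else if K = 2 then 2/3 else if K = 3 then 4/7 else 1 / Real.sqrt K

/-!
For the order `r = n` the RIP says that the quadratic form of `AᵀA - 1` is bounded by `δ` in
absolute value on unit vectors. Here this form is `v ↦ 2 c v₀ ∑ᵢ vᵢ₊₁` with `c = δ / √K`; by
Cauchy–Schwarz and AM-GM its maximum on the unit sphere is `c √K = δ`, attained in the direction
`(√K, 1, …, 1)`. The correlations `⟨A x, aⱼ⟩` are the entries of `AᵀA x`: at index `0` the
`K` contributions `c` add up to `K c = √K δ`, whereas every other index only sees itself.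
-/

open scoped Matrix

theorem two_mul_abs_mul_sum_le {ι : Type*} (s : Finset ι) (a : ℝ) (f : ι → ℝ) :
    2 * |a * ∑ i ∈ s, f i| ≤ √(#s) * (a ^ 2 + ∑ i ∈ s, f i ^ 2) := by
  have sum_sq_nonneg : 0 ≤ ∑ i ∈ s, f i ^ 2 := sum_nonneg fun i _ ↦ sq_nonneg (f i)
  have cauchy_schwarz : |∑ i ∈ s, f i| ≤ √(#s) * √(∑ i ∈ s, f i ^ 2) := by
    rw [← Real.sqrt_mul (Nat.cast_nonneg _)]
    exact Real.abs_le_sqrt sq_sum_le_card_mul_sum_sq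
  calc 2 * |a * ∑ i ∈ s, f i|
      = 2 * (|a| * |∑ i ∈ s, f i|) := by rw [abs_mul]
    _ ≤ 2 * (|a| * (√(#s) * √(∑ i ∈ s, f i ^ 2))) := by gcongr
    _ = √(#s) * (2 * |a| * √(∑ i ∈ s, f i ^ 2)) := by ring
    _ ≤ √(#s) * (|a| ^ 2 + √(∑ i ∈ s, f i ^ 2) ^ 2) := by gcongr; exact two_mul_le_add_sq _ _
    _ = √(#s) * (a ^ 2 + ∑ i ∈ s, f i ^ 2) := by rw [sq_abs, Real.sq_sqrt sum_sq_nonneg]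

section Gram

variable {m n : ℕ}

theorem nsq_eq_dotProduct (v : Fin n → ℝ) : nsq v = v ⬝ᵥ v := by
  simp only [nsq, dotProduct, sq]

theorem nsq_col (A : Matrix (Fin m) (Fin n) ℝ) (j : Fin n) : nsq (col A j) = (Aᵀ * A) j j :=
  nsq_eq_dotProduct (col A j)

theorem dot_mulVec_col (A : Matrix (Fin m) (Fin n) ℝ) (v : Fin n → ℝ) (j : Fin n) :
    dot (A *ᵥ v) (col A j) = ((Aᵀ * A) *ᵥ v) j := by
  rw [← Matrix.mulVec_mulVec]
  exact dotProduct_comm (A *ᵥ v) (col A j)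

theorem nsq_mulVec (A : Matrix (Fin m) (Fin n) ℝ) (v : Fin n → ℝ) :
    nsq (A *ᵥ v) = v ⬝ᵥ (Aᵀ * A) *ᵥ v := by
  rw [nsq_eq_dotProduct, ← Matrix.mulVec_mulVec, Matrix.dotProduct_mulVec v,
    Matrix.vecMul_transpose]

theorem rip_full_order_iff (A : Matrix (Fin m) (Fin n) ℝ) (δ : ℝ) :
    RIP A n δ ↔ ∀ v : Fin n → ℝ, |nsq (A *ᵥ v) - nsq v| ≤ δ * nsq v := by
  have card_vsupp_le (v : Fin n → ℝ) : #(vsupp v) ≤ n := card_finset_fin_le _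
  simp only [RIP, nsq, card_vsupp_le, forall_const, abs_le]
  refine forall_congr' fun v ↦ and_congr ?_ ?_ <;> constructor <;> intro h <;> linarith

end Gram

section StarGram

/-- The Gram matrix of `K + 1` unit vectors of which those with index `≠ 0` are orthonormal and
the one with index `0` has inner product `c` with each of the others. For `c = δ / √K` it is the
paper's `G`, whose first index is `0` here. -/
def starGram (K : ℕ) (c : ℝ) : Matrix (Fin (K + 1)) (Fin (K + 1)) ℝ :=
  fun j l ↦ if j = l then 1 else if j = 0 ∨ l = 0 then c else 0

variable {m K : ℕ} {c : ℝ}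

theorem starGram_apply_self (j : Fin (K + 1)) : starGram K c j j = 1 :=
  if_pos rfl

theorem starGram_mulVec_zero (v : Fin (K + 1) → ℝ) :
    (starGram K c *ᵥ v) 0 = v 0 + c * ∑ i : Fin K, v i.succ := by
  simp [starGram, Matrix.mulVec, dotProduct, Fin.sum_univ_succ, mul_sum, (Fin.succ_ne_zero _).symm]

theorem starGram_mulVec_succ (v : Fin (K + 1) → ℝ) (j : Fin K) :
    (starGram K c *ᵥ v) j.succ = c * v 0 + v j.succ := by
  simp [starGram, Matrix.mulVec, dotProduct, Fin.sum_univ_succ]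

theorem dotProduct_starGram_mulVec (v : Fin (K + 1) → ℝ) :
    v ⬝ᵥ starGram K c *ᵥ v = nsq v + 2 * c * (v 0 * ∑ i : Fin K, v i.succ) := by
  simp only [dotProduct, nsq, Fin.sum_univ_succ, starGram_mulVec_zero, starGram_mulVec_succ,
    mul_add, sum_add_distrib, mul_left_comm _ c, ← mul_sum, ← sum_mul, ← sq]
  ring

theorem rip_iff_of_gram_eq_starGram (hK : 0 < K) {A : Matrix (Fin m) (Fin (K + 1)) ℝ}
    (hA : Aᵀ * A = starGram K c) (δ : ℝ) : RIP A (K + 1) δ ↔ |c| * √K ≤ δ := by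
  have deviation (v : Fin (K + 1) → ℝ) :
      |nsq (A *ᵥ v) - nsq v| = |c| * (2 * |v 0 * ∑ i : Fin K, v i.succ|) := by
    rw [nsq_mulVec, hA, dotProduct_starGram_mulVec, add_sub_cancel_left, abs_mul, abs_mul, abs_two]
    ring
  simp only [rip_full_order_iff, deviation]
  constructor
  · intro h
    have hK' : (0 : ℝ) < K := Nat.cast_pos.2 hK
    have at_extremal : |c| * (2 * (√K * K)) ≤ δ * (K + K) := by
      simpa [nsq, Fin.sum_univ_succ, abs_of_nonneg] using h (Fin.cons √K fun _ ↦ 1)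
    refine le_of_mul_le_mul_right ?_ (add_pos hK' hK')
    linarith
  · intro h v
    calc |c| * (2 * |v 0 * ∑ i : Fin K, v i.succ|)
        ≤ |c| * (√K * nsq v) := by
          refine mul_le_mul_of_nonneg_left ?_ (abs_nonneg c)
          simpa only [card_univ, Fintype.card_fin, nsq, Fin.sum_univ_succ] using
            two_mul_abs_mul_sum_le univ (v 0) fun i : Fin K ↦ v i.succ
      _ = |c| * √K * nsq v := (mul_assoc _ _ _).symm
      _ ≤ δ * nsq v := by
          gcongr
          exact sum_nonneg fun i _ ↦ sq_nonneg (v i)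

theorem starGram_mulVec_indicator_apply_zero :
    (starGram K c *ᵥ fun j ↦ if j = 0 then 0 else 1) 0 = K * c := by
  simp [starGram_mulVec_zero, mul_comm]

theorem starGram_mulVec_indicator_apply_of_ne_zero {j : Fin (K + 1)} (hj : j ≠ 0) :
    (starGram K c *ᵥ fun j ↦ if j = 0 then 0 else 1) j = 1 := by
  obtain ⟨i, rfl⟩ := Fin.exists_succ_eq.2 hj
  simp [starGram_mulVec_succ]

end StarGram

theorem stmt15_general {m K : ℕ} (hK : 0 < K) {δ : ℝ} (hδ : 1 / √K ≤ δ)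
    {A : Matrix (Fin m) (Fin (K + 1)) ℝ} (hA : Aᵀ * A = starGram K (δ / √K))
    {y : Fin m → ℝ} (hy : y = A *ᵥ fun j ↦ if j = 0 then 0 else 1) :
    (∀ j, nsq (col A j) = 1) ∧
    (∀ δ' : ℝ, RIP A (K + 1) δ' ↔ δ ≤ δ') ∧
    |dot y (col A 0)| = √K * δ ∧
    (∀ j, j ≠ 0 → |dot y (col A j)| = 1) ∧
    1 ≤ √K * δ ∧
    (∀ j, |dot y (col A j)| ≤ |dot y (col A 0)|) := by
  have sqrt_pos : 0 < √(K : ℝ) := Real.sqrt_pos.2 (Nat.cast_pos.2 hK)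
  have δ_nonneg : 0 ≤ δ := le_trans (by positivity) hδ
  have one_le : 1 ≤ √K * δ := (div_le_iff₀' sqrt_pos).1 hδ
  have corr_zero : |dot y (col A 0)| = √K * δ := by
    rw [hy, dot_mulVec_col, hA, starGram_mulVec_indicator_apply_zero, mul_div_left_comm,
      Real.div_sqrt, mul_comm, abs_of_nonneg (by positivity)]
  have corr_ne_zero (j) (hj : j ≠ 0) : |dot y (col A j)| = 1 := by
    rw [hy, dot_mulVec_col, hA, starGram_mulVec_indicator_apply_of_ne_zero hj, abs_one]
  refine ⟨fun j ↦ ?_, fun δ' ↦ ?_, corr_zero, corr_ne_zero, one_le, fun j ↦ ?_⟩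
  · rw [nsq_col, hA, starGram_apply_self]
  · rw [rip_iff_of_gram_eq_starGram hK hA, abs_of_nonneg (by positivity),
      div_mul_cancel₀ δ sqrt_pos.ne']
  · obtain rfl | hj := eq_or_ne j 0
    · exact le_rfl
    · rwa [corr_ne_zero j hj, corr_zero]

/-- the `K ≥ 4` counterexample. -/
theorem stmt15 {m : ℕ} (K : ℕ) (hK : 4 ≤ K) (δ : ℝ)
    (hδ1 : 1 / Real.sqrt K ≤ δ) (hδ2 : δ < 1)
    (A : Matrix (Fin m) (Fin (K + 1)) ℝ)
    (G : Matrix (Fin (K + 1)) (Fin (K + 1)) ℝ)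
    (hG : G = fun j l =>
      if j = l then 1 else if j = 0 ∨ l = 0 then δ / Real.sqrt K else 0)
    (hA : A.transpose * A = G)
    (x : Fin (K + 1) → ℝ) (hx : x = fun j => if j = 0 then 0 else 1)
    (y : Fin m → ℝ) (hy : y = A.mulVec x) :
    (∀ j, nsq (col A j) = 1) ∧
    RIP A (K + 1) δ ∧
    (∀ δ' : ℝ, 0 ≤ δ' → δ' < 1 → RIP A (K + 1) δ' → δ ≤ δ') ∧
    |dot y (col A 0)| = Real.sqrt K * δ ∧
    (∀ j, j ≠ 0 → |dot y (col A j)| = 1) ∧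
    1 ≤ Real.sqrt K * δ ∧
    (∀ j, |dot y (col A j)| ≤ |dot y (col A 0)|) := by
  obtain ⟨unit, rip, corr⟩ :=
    stmt15_general (Nat.zero_lt_of_lt hK) hδ1 (hA.trans hG) (hy.trans (congrArg A.mulVec hx))
  exact ⟨unit, (rip δ).2 le_rfl, fun δ' _ _ ↦ (rip δ').1, corr⟩
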